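/- For general points: ℓ(L(3e+6, 3e−3, 6^{2e})) = 27 − 12e for 1 ≤ e ≤ 2 (virtual dimension −12e + 24); ℓ(L(3e+7, 3e−2, 6^{2e})) = 35 − 12e for 1 ≤ e ≤ 2 (virtual dimension −12e + 34); ℓ(L(9, 0, 6^3)) = 0 (virtual dimension −9); ℓ(L(10, 1, 6^3)) = 4 (virtual dimension 1); ℓ(L(14, 5, 6^5)) = 0 (virtual dimension −1); and ℓ(L(18, 9, 6^7)) = 0 (virtual dimension −3); in particular all these systems are special. -/

import Mathlib

open MvPolynomial

/-- The iterated partial derivative corresponding to the multi-index `ν`. -/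
noncomputable def mderiv (ν : Fin 3 → ℕ) :
    MvPolynomial (Fin 3) ℂ →ₗ[ℂ] MvPolynomial (Fin 3) ℂ :=
  ((pderiv (R := ℂ) (0 : Fin 3)).toLinearMap ^ ν 0) ∘ₗ
  ((pderiv (R := ℂ) (1 : Fin 3)).toLinearMap ^ ν 1) ∘ₗ
  ((pderiv (R := ℂ) (2 : Fin 3)).toLinearMap ^ ν 2)

/-- The linear system `L(d; m)` of homogeneous forms of degree `d` in three variables
all of whose partial derivatives of order `< m i` vanish at the point `p i`,
i.e. plane curves of degree `d` with multiplicity at least `m i` at `p i`. -/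
noncomputable def linSys {k : ℕ} (p : Fin k → Fin 3 → ℂ) (d : ℕ) (m : Fin k → ℕ) :
    Submodule ℂ (MvPolynomial (Fin 3) ℂ) :=
  (homogeneousSubmodule (Fin 3) ℂ d) ⊓
    ⨅ (i : Fin k), ⨅ (ν : Fin 3 → ℕ), ⨅ (_ : ν 0 + ν 1 + ν 2 < m i),
      LinearMap.ker ((aeval (p i)).toLinearMap ∘ₗ mderiv ν)

/-- The projective dimension `ℓ` of the linear system (`-1` means empty). -/
noncomputable def projDim {k : ℕ} (p : Fin k → Fin 3 → ℂ) (d : ℕ) (m : Fin k → ℕ) : ℤ :=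
  (Module.finrank ℂ (linSys p d m) : ℤ) - 1

/-- The virtual dimension `v = d(d+3)/2 - ∑ mᵢ(mᵢ+1)/2`. -/
def virtDim {k : ℕ} (d : ℕ) (m : Fin k → ℕ) : ℤ :=
  ((d : ℤ) * (d + 3)) / 2 - ∑ i : Fin k, ((m i : ℤ) * (m i + 1)) / 2

/-- The quasi-homogeneous multiplicity vector `(m₀, 6, …, 6)` on `n + 1` points. -/
def qh (n m0 : ℕ) : Fin (n + 1) → ℕ := fun i => if i = 0 then m0 else 6

/-- A property `Q` of configurations of `k` points of `ℙ²` (given by nonzero homogeneous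
coordinate vectors) holds for points in general position: there is a nonzero polynomial
in the coordinates such that `Q` holds whenever it does not vanish. -/
def Generically (k : ℕ) (Q : (Fin k → Fin 3 → ℂ) → Prop) : Prop :=
  ∃ P : MvPolynomial (Fin k × Fin 3) ℂ, P ≠ 0 ∧
    ∀ p : Fin k → Fin 3 → ℂ, (∀ i, p i ≠ 0) →
      eval (fun x => p x.1 x.2) P ≠ 0 → Q p

/-- The Taylor expansion of a form along the generic line through `p`. -/
noncomputable def jet (p : Fin 3 → ℂ) :
    MvPolynomial (Fin 3) ℂ →ₐ[ℂ] Polynomial (MvPolynomial (Fin 3) ℂ) :=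
  aeval fun i => Polynomial.C (C (p i)) + Polynomial.X * Polynomial.C (X i)

/-- The translation of the origin to `p`. -/
noncomputable def taylorShift (p : Fin 3 → ℂ) :
    MvPolynomial (Fin 3) ℂ →ₐ[ℂ] MvPolynomial (Fin 3) ℂ :=
  aeval fun i => C (p i) + X i

/-- The polynomial `f` has multiplicity at least `m` at `p`. -/
def VanishesTo (p : Fin 3 → ℂ) (m : ℕ) (f : MvPolynomial (Fin 3) ℂ) : Prop :=
  Polynomial.X ^ m ∣ jet p f

lemma jet_zero_taylorShift (p : Fin 3 → ℂ) (f : MvPolynomial (Fin 3) ℂ) :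
    jet 0 (taylorShift p f) = jet p f := by
  suffices h : (jet 0).comp (taylorShift p) = jet p from DFunLike.congr_fun h f
  ext i : 1
  have : jet 0 (C (p i)) = Polynomial.C (C (p i)) := (jet 0).commutes (p i)
  simp only [AlgHom.comp_apply, taylorShift, aeval_X, map_add, this]
  simp [jet]

lemma coeff_jet_zero (f : MvPolynomial (Fin 3) ℂ) (n : ℕ) (ν : Fin 3 →₀ ℕ) :
    coeff ν ((jet 0 f).coeff n) = if ν.degree = n then coeff ν f else 0 := by
  induction f using MvPolynomial.induction_on' with
  | monomial u a =>
    have h : jet 0 (monomial u a) =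
        Polynomial.C (monomial u a) * Polynomial.X ^ u.degree := by
      have hX (i : Fin 3) : jet 0 (X i) = Polynomial.C (X i) * Polynomial.X := by
        simp [jet]
      have hC : jet 0 (C a) = Polynomial.C (C a) := (jet 0).commutes a
      rw [monomial_eq, Finsupp.prod_fintype _ _ (by simp), Finsupp.degree_eq_sum,
        Fin.prod_univ_three, Fin.sum_univ_three]
      simp only [map_mul, map_pow, hX, hC]
      ring
    rw [h, Polynomial.coeff_C_mul_X_pow]
    by_cases hu : u = ν
    · subst hu
      by_cases hn : n = u.degree
      · rw [if_pos hn, if_pos hn.symm]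
      · rw [if_neg hn, if_neg (Ne.symm hn), coeff_zero]
    · rw [coeff_monomial, if_neg hu, ite_self]
      split_ifs
      · rw [coeff_monomial, if_neg hu]
      · exact coeff_zero _
  | add p q hp hq =>
    rw [map_add, Polynomial.coeff_add, coeff_add, hp, hq, coeff_add]
    split_ifs <;> simp

lemma vanishesTo_iff_coeff_taylorShift {p : Fin 3 → ℂ} {m : ℕ} {f : MvPolynomial (Fin 3) ℂ} :
    VanishesTo p m f ↔ ∀ ν : Fin 3 →₀ ℕ, ν.degree < m → coeff ν (taylorShift p f) = 0 := by
  rw [VanishesTo, Polynomial.X_pow_dvd_iff]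
  constructor
  · intro h ν hν
    have := congrArg (coeff ν) (h _ hν)
    rwa [← jet_zero_taylorShift, coeff_jet_zero, if_pos rfl, coeff_zero] at this
  · intro h n hn
    ext ν
    rw [← jet_zero_taylorShift, coeff_jet_zero, coeff_zero]
    split_ifs with hd
    · exact h ν (hd ▸ hn)
    · rfl

lemma pderiv_taylorShift (p : Fin 3 → ℂ) (i : Fin 3) (f : MvPolynomial (Fin 3) ℂ) :
    pderiv i (taylorShift p f) = taylorShift p (pderiv i f) := by
  have hX (j : Fin 3) : taylorShift p (X j) = C (p j) + X j := by simp [taylorShift]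
  induction f using MvPolynomial.induction_on with
  | C a => simp [taylorShift]
  | add f g hf hg => simp [hf, hg]
  | mul_X f j hf =>
    rw [map_mul, pderiv_mul, pderiv_mul, hf, map_add, map_mul, map_mul, hX]
    by_cases hij : i = j
    · subst hij; simp
    · simp [pderiv_X_of_ne (Ne.symm hij)]

lemma pderiv_pow_taylorShift (p : Fin 3 → ℂ) (i : Fin 3) (n : ℕ) (f : MvPolynomial (Fin 3) ℂ) :
    ((pderiv (R := ℂ) i).toLinearMap ^ n) (taylorShift p f) =
      taylorShift p (((pderiv (R := ℂ) i).toLinearMap ^ n) f) := by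
  induction n with
  | zero => simp
  | succ n ih =>
    rw [pow_succ', Module.End.mul_apply, Module.End.mul_apply, ih]
    exact pderiv_taylorShift p i _

lemma mderiv_taylorShift (p : Fin 3 → ℂ) (ν : Fin 3 → ℕ) (f : MvPolynomial (Fin 3) ℂ) :
    mderiv ν (taylorShift p f) = taylorShift p (mderiv ν f) := by
  simp only [mderiv, LinearMap.comp_apply, pderiv_pow_taylorShift]

lemma coeff_zero_taylorShift (p : Fin 3 → ℂ) (f : MvPolynomial (Fin 3) ℂ) :
    coeff 0 (taylorShift p f) = eval p f := by
  have h : constantCoeff.comp (taylorShift p).toRingHom = eval p := by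
    refine MvPolynomial.ringHom_ext (fun r => ?_) fun i => ?_ <;> simp [taylorShift]
  exact DFunLike.congr_fun h f

lemma coeff_pderiv_pow_eq_zero_iff (i : Fin 3) (n : ℕ) (f : MvPolynomial (Fin 3) ℂ)
    (u : Fin 3 →₀ ℕ) :
    coeff u (((pderiv (R := ℂ) i).toLinearMap ^ n) f) = 0 ↔
      coeff (u + Finsupp.single i n) f = 0 := by
  induction n generalizing u with
  | zero => simp
  | succ n ih =>
    rw [pow_succ', Module.End.mul_apply]
    have hu : (u i : ℂ) + 1 ≠ 0 := by exact_mod_cast (u i).succ_ne_zero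
    change coeff u (pderiv i _) = 0 ↔ _
    rw [coeff_pderiv, mul_eq_zero, or_iff_left hu, ih, add_assoc, ← Finsupp.single_add, add_comm 1]

lemma coeff_zero_mderiv_eq_zero_iff (ν : Fin 3 → ℕ) (f : MvPolynomial (Fin 3) ℂ) :
    coeff 0 (mderiv ν f) = 0 ↔ coeff (Finsupp.equivFunOnFinite.symm ν) f = 0 := by
  simp only [mderiv, LinearMap.comp_apply, coeff_pderiv_pow_eq_zero_iff]
  have : 0 + Finsupp.single 0 (ν 0) + Finsupp.single 1 (ν 1) + Finsupp.single 2 (ν 2) =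
      Finsupp.equivFunOnFinite.symm ν := by
    ext i
    fin_cases i <;> simp
  rw [this]

lemma vanishesTo_iff_eval_mderiv {p : Fin 3 → ℂ} {m : ℕ} {f : MvPolynomial (Fin 3) ℂ} :
    VanishesTo p m f ↔
      ∀ ν : Fin 3 → ℕ, ν 0 + ν 1 + ν 2 < m → eval p (mderiv ν f) = 0 := by
  rw [vanishesTo_iff_coeff_taylorShift, Finsupp.equivFunOnFinite.forall_congr_left]
  refine forall_congr' fun ν => ?_
  rw [Finsupp.degree_eq_sum, Fin.sum_univ_three, ← coeff_zero_taylorShift, ← mderiv_taylorShift,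
    coeff_zero_mderiv_eq_zero_iff]
  rfl

lemma mem_linSys {k : ℕ} {p : Fin k → Fin 3 → ℂ} {d : ℕ} {m : Fin k → ℕ}
    {f : MvPolynomial (Fin 3) ℂ} :
    f ∈ linSys p d m ↔ f.IsHomogeneous d ∧ ∀ i, VanishesTo (p i) (m i) f := by
  simp [linSys, vanishesTo_iff_eval_mderiv, Submodule.mem_inf, Submodule.mem_iInf]

lemma VanishesTo.mono {p : Fin 3 → ℂ} {a b : ℕ} {f : MvPolynomial (Fin 3) ℂ}
    (hf : VanishesTo p b f) (h : a ≤ b) : VanishesTo p a f :=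
  (pow_dvd_pow _ h).trans hf

lemma VanishesTo.mul {p : Fin 3 → ℂ} {a b : ℕ} {f g : MvPolynomial (Fin 3) ℂ}
    (hf : VanishesTo p a f) (hg : VanishesTo p b g) : VanishesTo p (a + b) (f * g) := by
  rw [VanishesTo, map_mul, pow_add]
  exact mul_dvd_mul hf hg

lemma VanishesTo.pow {p : Fin 3 → ℂ} {a : ℕ} {f : MvPolynomial (Fin 3) ℂ}
    (hf : VanishesTo p a f) (n : ℕ) : VanishesTo p (n * a) (f ^ n) := by
  rw [VanishesTo, map_pow, mul_comm, pow_mul]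
  exact pow_dvd_pow_of_dvd hf n

/-- Multiplicities are additive. -/
lemma VanishesTo.of_mul {p : Fin 3 → ℂ} {m μ : ℕ} {f g : MvPolynomial (Fin 3) ℂ}
    (hfg : VanishesTo p m (f * g)) (hf : ¬ VanishesTo p (μ + 1) f) :
    VanishesTo p (m - μ) g := by
  rw [VanishesTo, map_mul] at hfg
  have h0 : jet p f ≠ 0 := fun h => hf (by rw [VanishesTo, h]; exact dvd_zero _)
  obtain ⟨e, he, h⟩ := Polynomial.exists_eq_pow_rootMultiplicity_mul_and_not_dvd (jet p f) h0 0
  rw [Polynomial.C_0, sub_zero] at he h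
  set a := (jet p f).rootMultiplicity 0
  have ha : a ≤ μ := by
    by_contra! hlt
    exact hf ((pow_dvd_pow _ hlt).trans (Dvd.intro _ he.symm))
  by_cases hm : m ≤ a
  · rw [VanishesTo, Nat.sub_eq_zero_of_le (hm.trans ha), pow_zero]
    exact one_dvd _
  · push Not at hm
    refine VanishesTo.mono (b := m - a) ?_ (by omega)
    rw [he, mul_assoc, show m = a + (m - a) by omega, pow_add] at hfg
    have := (mul_dvd_mul_iff_left (pow_ne_zero a Polynomial.X_ne_zero)).mp hfg
    exact Polynomial.prime_X.pow_dvd_of_dvd_mul_left _ h this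

/-- The pullback of a polynomial of multiplicity `m` at `p` along an arc through `p`. -/
lemma VanishesTo.pow_dvd_aeval {p : Fin 3 → ℂ} {m : ℕ} {f : MvPolynomial (Fin 3) ℂ}
    (hf : VanishesTo p m f) (s : Polynomial ℂ) (η : Fin 3 → Polynomial ℂ) :
    s ^ m ∣ aeval (fun i => Polynomial.C (p i) + s * η i) f := by
  let θ : Polynomial (MvPolynomial (Fin 3) ℂ) →+* Polynomial ℂ :=
    Polynomial.eval₂RingHom (aeval (R := ℂ) η).toRingHom s
  have h : θ.comp (jet p).toRingHom =
      (aeval (R := ℂ) fun i => Polynomial.C (p i) + s * η i).toRingHom := by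
    refine MvPolynomial.ringHom_ext (fun r => ?_) fun i => ?_
    · have : jet p (C r) = Polynomial.C (C r) := (jet p).commutes r
      simp [θ, this]
    · simp [θ, jet]; exact mul_comm _ _
  have hd := map_dvd θ hf
  rw [map_pow, show θ Polynomial.X = s by simp [θ]] at hd
  exact (DFunLike.congr_fun h f) ▸ hd

instance finiteDimensional_homogeneousSubmodule (d : ℕ) :
    FiniteDimensional ℂ (homogeneousSubmodule (Fin 3) ℂ d) :=
  Module.Finite.iff_fg.mpr (homogeneousSubmodule_fg (Fin 3) ℂ d)

lemma linSys_le {k : ℕ} (p : Fin k → Fin 3 → ℂ) (d : ℕ) (m : Fin k → ℕ) :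
    linSys p d m ≤ homogeneousSubmodule (Fin 3) ℂ d := inf_le_left

instance finiteDimensional_linSys {k : ℕ} (p : Fin k → Fin 3 → ℂ) (d : ℕ) (m : Fin k → ℕ) :
    FiniteDimensional ℂ (linSys p d m) :=
  Submodule.finiteDimensional_of_le (linSys_le p d m)

lemma finrank_homogeneousSubmodule (d : ℕ) :
    Module.finrank ℂ (homogeneousSubmodule (Fin 3) ℂ d) = (d + 2).choose 2 := by
  have b := basisRestrictSupport ℂ {ν : Fin 3 →₀ ℕ | ν.degree = d}
  have h : homogeneousSubmodule (Fin 3) ℂ d = restrictSupport ℂ {ν : Fin 3 →₀ ℕ | ν.degree = d} :=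
    homogeneousSubmodule_eq_finsupp_supported _ _ _
  have hs : {ν : Fin 3 →₀ ℕ | ν.degree = d} =
      ((Finset.univ : Finset (Fin 3)).finsuppAntidiag d : Set (Fin 3 →₀ ℕ)) := by
    ext ν
    simp [Finset.mem_finsuppAntidiag, Finsupp.degree_eq_sum]
  rw [h, Module.finrank_eq_nat_card_basis b, hs, Nat.card_coe_set_eq, Set.ncard_coe_finset,
    Finset.card_finsuppAntidiag_nat_eq_choose, Finset.card_univ, Fintype.card_fin,
    show 3 + d - 1 = d + 2 by omega, ← Nat.choose_symm_add]

lemma coeff_X_mul_pderiv (i : Fin 3) (u : Fin 3 →₀ ℕ) (f : MvPolynomial (Fin 3) ℂ) :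
    coeff u (X i * pderiv i f) = u i * coeff u f := by
  rw [coeff_X_mul']
  split_ifs with h
  · have h1 : (Finsupp.single i 1 : Fin 3 →₀ ℕ) ≤ u := by
      rw [Finsupp.single_le_iff]
      exact Nat.one_le_iff_ne_zero.mpr (Finsupp.mem_support_iff.mp h)
    have h2 : (u - (Finsupp.single i 1 : Fin 3 →₀ ℕ)) i + 1 = u i := by
      have := h1 i
      simp only [Finsupp.single_eq_same] at this
      simp only [Finsupp.tsub_apply, Finsupp.single_eq_same]
      omega
    rw [coeff_pderiv, tsub_add_cancel_of_le h1, mul_comm, ← Nat.cast_succ, Nat.succ_eq_add_one, h2]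
  · rw [Finsupp.notMem_support_iff.mp h, Nat.cast_zero, zero_mul]

/-- Euler's identity for the Taylor coefficients of a form at a point. -/
lemma sum_mul_coeff_taylorShift {f : MvPolynomial (Fin 3) ℂ} {d : ℕ} (hf : f.IsHomogeneous d)
    (p : Fin 3 → ℂ) (u : Fin 3 →₀ ℕ) :
    ∑ i, p i * (coeff (u + Finsupp.single i 1) (taylorShift p f) * (u i + 1)) =
      (d - u.degree) * coeff u (taylorShift p f) := by
  have h := congrArg (coeff u) (congrArg (taylorShift p) hf.sum_X_mul_pderiv)
  have hX (i : Fin 3) : taylorShift p (X i) = C (p i) + X i := by simp [taylorShift]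
  rw [map_sum, map_nsmul, coeff_smul, nsmul_eq_mul, coeff_sum] at h
  simp only [map_mul, hX, ← pderiv_taylorShift, add_mul, coeff_add, coeff_C_mul,
    coeff_X_mul_pderiv, coeff_pderiv, Finset.sum_add_distrib, ← Finset.sum_mul] at h
  rw [sub_mul, ← h, Finsupp.degree_eq_sum]
  push_cast
  ring

/-- At a point with nonzero `j`-th coordinate, the multiplicity of a form is determined by the
partial derivatives in the other two directions. -/
lemma vanishesTo_of_coeff_taylorShift {f : MvPolynomial (Fin 3) ℂ} {d : ℕ}
    (hf : f.IsHomogeneous d) {p : Fin 3 → ℂ} {m : ℕ} {j : Fin 3} (hj : p j ≠ 0)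
    (h : ∀ ν : Fin 3 →₀ ℕ, ν j = 0 → ν.degree < m → coeff ν (taylorShift p f) = 0) :
    VanishesTo p m f := by
  rw [vanishesTo_iff_coeff_taylorShift]
  suffices H : ∀ n, ∀ ν : Fin 3 →₀ ℕ, ν j ≤ n → ν.degree < m → coeff ν (taylorShift p f) = 0 from
    fun ν => H _ ν le_rfl
  intro n
  induction n with
  | zero => exact fun ν hν => h ν (Nat.le_zero.mp hν)
  | succ n ih =>
    intro ν hν hm
    by_cases hn : ν j ≤ n
    · exact ih ν hn hm
    obtain ⟨u, rfl⟩ : ∃ u : Fin 3 →₀ ℕ, ν = u + Finsupp.single j 1 := by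
      refine ⟨ν - Finsupp.single j 1, (tsub_add_cancel_of_le ?_).symm⟩
      rw [Finsupp.single_le_iff]
      omega
    rw [map_add, Finsupp.degree_single] at hm
    have hu : u j ≤ n := by simpa using hν
    have E := sum_mul_coeff_taylorShift hf p u
    rw [ih u hu (by omega), mul_zero, Finset.sum_eq_single j] at E
    · have hu1 : (u j : ℂ) + 1 ≠ 0 := by exact_mod_cast (u j).succ_ne_zero
      simpa [hj, hu1] using E
    · intro i _ hij
      rw [ih _ (by simpa [hij.symm] using hu), zero_mul, mul_zero]
      rwa [map_add, Finsupp.degree_single]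
    · simp

/-- A form of degree `d` imposes at most `m * (m + 1) / 2` conditions at each point. -/
theorem choose_le_finrank_linSys_add {k : ℕ} {p : Fin k → Fin 3 → ℂ} (hp : ∀ i, p i ≠ 0) (d : ℕ)
    (m : Fin k → ℕ) :
    (d + 2).choose 2 ≤
      Module.finrank ℂ (linSys p d m) + ∑ i, ∑ s ∈ Finset.range (m i), (s + 1) := by
  choose j hj using fun i => Function.ne_iff.mp (hp i)
  let Φ : homogeneousSubmodule (Fin 3) ℂ d →ₗ[ℂ]
      ((i : Fin k) × (s : Fin (m i)) × Fin (s + 1)) → ℂ :=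
    LinearMap.pi fun x => lcoeff ℂ (Finsupp.single (j x.1 + 1) (x.2.2 : ℕ) +
      Finsupp.single (j x.1 + 2) (x.2.1 - x.2.2 : ℕ)) ∘ₗ (taylorShift (p x.1)).toLinearMap ∘ₗ
      (homogeneousSubmodule (Fin 3) ℂ d).subtype
  have hle : (LinearMap.ker Φ).map (homogeneousSubmodule (Fin 3) ℂ d).subtype ≤ linSys p d m := by
    rintro _ ⟨⟨f, hf⟩, hΦ, rfl⟩
    refine mem_linSys.mpr ⟨hf, fun i => vanishesTo_of_coeff_taylorShift hf (hj i) fun ν h0 hν => ?_⟩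
    have hdeg : ν (j i + 1) + ν (j i + 2) = ν.degree := by
      rw [Finsupp.degree_eq_sum, Fin.sum_univ_three]
      revert h0
      generalize j i = a
      intro h0
      fin_cases a <;> simp_all [add_comm]
    have := congrFun hΦ ⟨i, ⟨ν.degree, hν⟩, ⟨ν (j i + 1), by simp; omega⟩⟩
    have hν' : Finsupp.single (j i + 1) (ν (j i + 1)) +
        Finsupp.single (j i + 2) (ν.degree - ν (j i + 1)) = ν := by
      rw [← hdeg, Nat.add_sub_cancel_left]
      revert h0
      generalize j i = a
      intro h0
      ext b
      fin_cases a <;> fin_cases b <;> simp at h0 ⊢ <;> simp [h0]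
    change coeff (Finsupp.single (j i + 1) (ν (j i + 1)) +
      Finsupp.single (j i + 2) (ν.degree - ν (j i + 1))) (taylorShift (p i) f) = 0 at this
    rwa [hν'] at this
  have h1 := Submodule.finrank_mono hle
  rw [Submodule.finrank_map_subtype_eq] at h1
  have h2 := LinearMap.finrank_range_add_finrank_ker Φ
  have h3 := Submodule.finrank_le (LinearMap.range Φ)
  rw [Module.finrank_fintype_fun_eq_card] at h3
  simp only [Fintype.card_sigma, Fintype.card_fin] at h3
  simp only [Fin.sum_univ_eq_sum_range (fun s => s + 1)] at h3
  rw [finrank_homogeneousSubmodule] at h2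
  omega

lemma finrank_linSys_le_of_pow_mul {k : ℕ} {p : Fin k → Fin 3 → ℂ} {a d₁ d₂ d : ℕ}
    {m₁ m₂ m : Fin k → ℕ} {F : MvPolynomial (Fin 3) ℂ} (hF : F ∈ linSys p d₁ m₁) (hF0 : F ≠ 0)
    (hd : a * d₁ + d₂ = d) (hm : ∀ i, m i ≤ a * m₁ i + m₂ i) :
    Module.finrank ℂ (linSys p d₂ m₂) ≤ Module.finrank ℂ (linSys p d m) := by
  rw [mem_linSys] at hF
  rw [((linSys p d₂ m₂).equivMapOfInjective (LinearMap.mulLeft ℂ (F ^ a))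
    (mul_right_injective₀ (pow_ne_zero a hF0))).finrank_eq]
  refine Submodule.finrank_mono ?_
  rintro _ ⟨g, hg, rfl⟩
  have hg := mem_linSys.mp hg
  refine mem_linSys.mpr ⟨?_, fun i => (((hF.2 i).pow a).mul (hg.2 i)).mono (hm i)⟩
  rw [← hd, mul_comm a]
  exact (hF.1.pow a).mul hg.1

/-- The lower bound for a system with a multiple fixed curve. -/
lemma le_finrank_linSys_of_pow_mul {k : ℕ} {p : Fin k → Fin 3 → ℂ} (hp : ∀ i, p i ≠ 0)
    {d : ℕ} {m : Fin k → ℕ} (a d₁ d₂ : ℕ) (m₁ m₂ : Fin k → ℕ) {N : ℕ}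
    (h₁ : ∑ i, ∑ s ∈ Finset.range (m₁ i), (s + 1) < (d₁ + 2).choose 2)
    (h₂ : N + ∑ i, ∑ s ∈ Finset.range (m₂ i), (s + 1) ≤ (d₂ + 2).choose 2)
    (hd : a * d₁ + d₂ = d) (hm : ∀ i, m i ≤ a * m₁ i + m₂ i) :
    N ≤ Module.finrank ℂ (linSys p d m) := by
  have c₁ := choose_le_finrank_linSys_add hp d₁ m₁
  have c₂ := choose_le_finrank_linSys_add hp d₂ m₂
  obtain ⟨⟨F, hF⟩, hF0⟩ := Module.finrank_pos_iff_exists_ne_zero.mp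
    (show 0 < Module.finrank ℂ (linSys p d₁ m₁) by omega)
  have := finrank_linSys_le_of_pow_mul hF (fun h => hF0 (Subtype.ext h)) hd hm
  omega

/-- The common kernel of a finite family of functionals depending polynomially on parameters has
upper semicontinuous dimension. -/
theorem exists_ne_zero_forall_finrank_iInf_ker_le {K σ κ V : Type*} [Field K] [Finite κ]
    [AddCommGroup V] [Module K V] [FiniteDimensional K V] (φ : κ → V →ₗ[K] MvPolynomial σ K)
    (x₀ : σ → K) :
    ∃ P : MvPolynomial σ K, P ≠ 0 ∧ ∀ x, eval x P ≠ 0 →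
      Module.finrank K (⨅ a, LinearMap.ker ((aeval x).toLinearMap ∘ₗ φ a) : Submodule K V) ≤
        Module.finrank K (⨅ a, LinearMap.ker ((aeval x₀).toLinearMap ∘ₗ φ a) : Submodule K V) := by
  have := Fintype.ofFinite κ
  classical
  set N : (σ → K) → Submodule K V := fun x => ⨅ a, LinearMap.ker ((aeval x).toLinearMap ∘ₗ φ a)
    with hN
  have mem_N {x : σ → K} {v : V} : v ∈ N x ↔ ∀ a, eval x (φ a v) = 0 := by
    simp [hN, Submodule.mem_iInf, aeval_eq_eval]
  change ∃ P : MvPolynomial σ K, P ≠ 0 ∧ ∀ x, eval x P ≠ 0 →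
    Module.finrank K (N x) ≤ Module.finrank K (N x₀)
  obtain ⟨U, hU⟩ := Submodule.exists_isCompl (N x₀)
  have hdim := Submodule.finrank_add_eq_of_isCompl hU
  let u := Module.finBasis K U
  let A : Matrix κ (Fin (Module.finrank K U)) (MvPolynomial σ K) := .of fun a b => φ a (u b)
  have hA (x : σ → K) (c : Fin (Module.finrank K U) → K) :
      (A.map (eval x)).mulVec c = 0 ↔ ((∑ b, c b • u b : U) : V) ∈ N x := by
    rw [mem_N, funext_iff]
    refine forall_congr' fun a => ?_
    simp [Matrix.mulVec, dotProduct, A, map_sum, smul_eval, mul_comm]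
  have hinj : LinearMap.ker (Matrix.toLin' (A.map (eval x₀))) = ⊥ := by
    rw [LinearMap.ker_eq_bot']
    intro c hc
    rw [Matrix.toLin'_apply, hA] at hc
    have h0 : ∑ b, c b • u b = 0 :=
      Subtype.ext (Submodule.disjoint_def.mp hU.disjoint _ hc (∑ b, c b • u b : U).2)
    exact funext (Fintype.linearIndependent_iff.mp u.linearIndependent c h0)
  obtain ⟨G, hG⟩ := LinearMap.exists_leftInverse_of_injective _ hinj
  let B : Matrix (Fin (Module.finrank K U)) κ (MvPolynomial σ K) := G.toMatrix'.map C
  have hP (x : σ → K) : eval x ((B * A).det) =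
      (G.toMatrix' * A.map (eval x)).det := by
    rw [RingHom.map_det, RingHom.mapMatrix_apply, Matrix.map_mul, Matrix.map_map]
    congr 2
    ext
    simp
  refine ⟨(B * A).det, fun h => ?_, fun x hx => ?_⟩
  · have h1 := hP x₀
    rw [h, map_zero, ← LinearMap.toMatrix'_toLin' (A.map (eval x₀)), ← LinearMap.toMatrix'_comp, hG,
      LinearMap.toMatrix'_id, Matrix.det_one] at h1
    exact zero_ne_one h1
  · rw [hP] at hx
    have hdisj : Disjoint (N x) U := by
      rw [Submodule.disjoint_def]
      intro v hv hvU
      have hv' : v = ((∑ b, u.repr ⟨v, hvU⟩ b • u b : U) : V) := by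
        rw [u.sum_repr]
      have h0 : (A.map (eval x)).mulVec (u.repr ⟨v, hvU⟩) = 0 := by
        rwa [hA, ← hv']
      have h1 : (⇑(u.repr ⟨v, hvU⟩) : Fin (Module.finrank K U) → K) = 0 :=
        Matrix.eq_zero_of_mulVec_eq_zero hx (by
          rw [← Matrix.mulVec_mulVec, h0, Matrix.mulVec_zero])
      rw [hv', h1]
      simp
    have := Submodule.finrank_add_finrank_le_of_disjoint hdisj
    omega

/-- Upper semicontinuity of the dimension of a linear system in the base points. -/
theorem generically_finrank_linSys_le {k : ℕ} (p₀ : Fin k → Fin 3 → ℂ) (d : ℕ) (m : Fin k → ℕ) :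
    Generically k fun p =>
      Module.finrank ℂ (linSys p d m) ≤ Module.finrank ℂ (linSys p₀ d m) := by
  let M := ∑ i, m i
  have hM {i : Fin k} {ν : Fin 3 → ℕ} (hν : ν 0 + ν 1 + ν 2 < m i) (j : Fin 3) : ν j < M := by
    have := Finset.single_le_sum (f := m) (fun _ _ => Nat.zero_le _) (Finset.mem_univ i)
    fin_cases j <;> simp [M] <;> omega
  let φ (a : Fin k × (Fin 3 → Fin M)) :
      homogeneousSubmodule (Fin 3) ℂ d →ₗ[ℂ] MvPolynomial (Fin k × Fin 3) ℂ :=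
    if (a.2 0 + a.2 1 + a.2 2 : ℕ) < m a.1 then
      (rename fun j => (a.1, j)).toLinearMap ∘ₗ mderiv (fun j => a.2 j) ∘ₗ
        (homogeneousSubmodule (Fin 3) ℂ d).subtype
    else 0
  have hφ (p : Fin k → Fin 3 → ℂ) :
      Module.finrank ℂ (⨅ a, LinearMap.ker ((aeval fun x : Fin k × Fin 3 => p x.1 x.2).toLinearMap
        ∘ₗ φ a) : Submodule ℂ (homogeneousSubmodule (Fin 3) ℂ d)) =
      Module.finrank ℂ (linSys p d m) := by
    rw [← (Submodule.comapSubtypeEquivOfLe (linSys_le p d m)).finrank_eq]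
    have : (⨅ a, LinearMap.ker ((aeval fun x : Fin k × Fin 3 => p x.1 x.2).toLinearMap
        ∘ₗ φ a) : Submodule ℂ (homogeneousSubmodule (Fin 3) ℂ d)) =
        (linSys p d m).comap (homogeneousSubmodule (Fin 3) ℂ d).subtype := by
      ext f
      have hev (i : Fin k) (g : MvPolynomial (Fin 3) ℂ) :
          aeval (fun x : Fin k × Fin 3 => p x.1 x.2) (rename (fun j => (i, j)) g) =
            eval (p i) g := by
        rw [aeval_rename, aeval_eq_eval]
        rfl
      rw [Submodule.mem_iInf, Submodule.mem_comap, mem_linSys]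
      simp only [vanishesTo_iff_eval_mderiv, LinearMap.mem_ker, LinearMap.comp_apply]
      constructor
      · intro h
        refine ⟨f.2, fun i ν hν => ?_⟩
        have := h (i, fun j => ⟨ν j, hM hν j⟩)
        simp only [φ, if_pos hν] at this
        exact (hev i _).symm.trans this
      · rintro ⟨-, h⟩ ⟨i, ν⟩
        by_cases hν : (ν 0 + ν 1 + ν 2 : ℕ) < m i
        · simp only [φ, if_pos hν]
          exact (hev i _).trans (h i (fun j => ν j) hν)
        · simp [φ, if_neg hν]
    rw [this]
  obtain ⟨P, hP0, hP⟩ := exists_ne_zero_forall_finrank_iInf_ker_le φ fun x => p₀ x.1 x.2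
  refine ⟨P, hP0, fun p _ hp => ?_⟩
  have := hP _ hp
  rwa [hφ, hφ] at this

/-- The cofactor of a homogeneous factor can be taken homogeneous. -/
lemma exists_isHomogeneous_mul_eq {f F : MvPolynomial (Fin 3) ℂ} {d k : ℕ}
    (hf : f.IsHomogeneous d) (hF : F.IsHomogeneous k) (hk : k ≤ d) (h : F ∣ f) :
    ∃ g : MvPolynomial (Fin 3) ℂ, g.IsHomogeneous (d - k) ∧ F * g = f := by
  obtain ⟨g, rfl⟩ := h
  refine ⟨homogeneousComponent (d - k) g, homogeneousComponent_isHomogeneous _ _, ?_⟩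
  have h1 := homogeneousComponent_of_mem (m := d) ((mem_homogeneousSubmodule d _).mpr hf)
  rw [if_pos rfl] at h1
  conv_rhs => rw [← h1, ← sum_homogeneousComponent g, Finset.mul_sum, map_sum]
  have h2 (n : ℕ) : homogeneousComponent d (F * homogeneousComponent n g) =
      if n = d - k then F * homogeneousComponent (d - k) g else 0 := by
    rw [homogeneousComponent_of_mem (hF.mul (homogeneousComponent_isHomogeneous n g))]
    by_cases hn : n = d - k
    · subst hn
      rw [if_pos rfl, if_pos (by omega)]
    · rw [if_neg hn, if_neg (by omega)]
  rw [Finset.sum_congr rfl fun n _ => h2 n, Finset.sum_ite_eq']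
  split_ifs with hmem
  · rfl
  · rw [homogeneousComponent_eq_zero _ _ (by rw [Finset.mem_range] at hmem; omega), mul_zero]

lemma natDegree_aeval_le {f : MvPolynomial (Fin 3) ℂ} {d k : ℕ} (hf : f.IsHomogeneous d)
    {ψ : Fin 3 → Polynomial ℂ} (hψ : ∀ i, (ψ i).natDegree ≤ k) :
    (aeval ψ f).natDegree ≤ k * d := by
  rw [aeval_def, eval₂_eq']
  refine Polynomial.natDegree_sum_le_of_forall_le _ _ fun ν hν => ?_
  refine (Polynomial.natDegree_C_mul_le _ _).trans ((Polynomial.natDegree_prod_le _ _).trans ?_)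
  have hd : ν.degree = d := by
    rw [Finsupp.degree_eq_weight_one]
    exact hf (mem_support_iff.mp hν)
  rw [← hd, Finsupp.degree_eq_sum, Finset.mul_sum]
  refine Finset.sum_le_sum fun i _ => Polynomial.natDegree_pow_le.trans ?_
  rw [mul_comm]
  exact Nat.mul_le_mul_right _ (hψ i)

lemma aeval_C_mul {f : MvPolynomial (Fin 3) ℂ} {d : ℕ} (hf : f.IsHomogeneous d) (c : ℂ)
    (ψ : Fin 3 → Polynomial ℂ) :
    aeval (fun i => Polynomial.C c * ψ i) f = Polynomial.C (c ^ d) * aeval ψ f := by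
  rw [aeval_def, eval₂_eq', aeval_def, eval₂_eq', Finset.mul_sum]
  refine Finset.sum_congr rfl fun ν hν => ?_
  have hd : ν.degree = d := by
    rw [Finsupp.degree_eq_weight_one]
    exact hf (mem_support_iff.mp hν)
  simp only [mul_pow, Finset.prod_mul_distrib, Finset.prod_pow_eq_pow_sum,
    ← Finsupp.degree_eq_sum, hd, map_pow]
  ring

/-- Restriction of a linear system to a parametrized plane curve `F` of degree `k`. At the point
`p i` the curve has multiplicity at most `μ i`, and the parametrization meets the point along the
divisor of `s i`. -/
theorem finrank_linSys_le_of_curve {n k d : ℕ} {p : Fin n → Fin 3 → ℂ} {m μ : Fin n → ℕ}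
    {F : MvPolynomial (Fin 3) ℂ} (hF : F.IsHomogeneous k) (hk : k ≤ d) {ψ : Fin 3 → Polynomial ℂ}
    (hψ : ∀ j, (ψ j).natDegree ≤ k)
    (hdiv : ∀ f : MvPolynomial (Fin 3) ℂ, f.IsHomogeneous d → aeval ψ f = 0 → F ∣ f)
    (hmult : ∀ i, ¬ VanishesTo (p i) (μ i + 1) F)
    {s : Fin n → Polynomial ℂ} (hs : ∀ i, (s i).Monic) (hμ : ∀ i, (s i).natDegree = μ i)
    (hcop : Pairwise (Function.onFun IsCoprime s))
    (hcontact : ∀ i, ∃ c : ℂ, c ≠ 0 ∧ ∀ j, s i ∣ Polynomial.C c * ψ j - Polynomial.C (p i j)) :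
    Module.finrank ℂ (linSys p d m) ≤ (k * d + 1 - ∑ i, μ i * m i) +
      Module.finrank ℂ (linSys p (d - k) fun i => m i - μ i) := by
  let ρ : linSys p d m →ₗ[ℂ] Polynomial ℂ := (aeval ψ).toLinearMap ∘ₗ (linSys p d m).subtype
  let W := ∏ i, s i ^ m i
  have hW : W.Monic := Polynomial.monic_prod_of_monic _ _ fun i _ => (hs i).pow _
  have hWdeg : W.natDegree = ∑ i, μ i * m i := by
    rw [Polynomial.natDegree_prod_of_monic _ _ fun i _ => (hs i).pow _]
    exact Finset.sum_congr rfl fun i _ => by rw [(hs i).natDegree_pow, hμ, mul_comm]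
  have hrange : LinearMap.range ρ ≤
      (Polynomial.degreeLT ℂ (k * d + 1 - ∑ i, μ i * m i)).map (LinearMap.mulLeft ℂ W) := by
    rintro _ ⟨⟨f, hf⟩, rfl⟩
    rw [mem_linSys] at hf
    change aeval ψ f ∈ _
    have hdvd : W ∣ aeval ψ f := by
      refine Finset.prod_dvd_of_coprime (fun i _ j _ hij => (hcop hij).pow) fun i _ => ?_
      obtain ⟨c, hc, h⟩ := hcontact i
      choose η hη using h
      have h1 := (hf.2 i).pow_dvd_aeval (s i) η
      rw [show (fun j => Polynomial.C (p i j) + s i * η j) = fun j => Polynomial.C c * ψ j from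
        funext fun j => by rw [← hη]; ring, aeval_C_mul hf.1] at h1
      exact (IsUnit.dvd_mul_left (Polynomial.isUnit_C.mpr (pow_ne_zero d hc).isUnit)).mp h1
    obtain ⟨g, hg⟩ := hdvd
    refine ⟨g, ?_, hg.symm⟩
    rw [SetLike.mem_coe, Polynomial.mem_degreeLT]
    by_cases hg0 : g = 0
    · rw [hg0, Polynomial.degree_zero]
      exact WithBot.bot_lt_coe _
    · rw [Polynomial.degree_eq_natDegree hg0, Nat.cast_lt]
      have h2 := natDegree_aeval_le hf.1 hψ
      rw [hg, hW.natDegree_mul' hg0, hWdeg] at h2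
      omega
  have hker : (LinearMap.ker ρ).map (linSys p d m).subtype ≤
      (linSys p (d - k) fun i => m i - μ i).map (LinearMap.mulLeft ℂ F) := by
    rintro _ ⟨⟨f, hf⟩, h0, rfl⟩
    rw [mem_linSys] at hf
    obtain ⟨g, hg, rfl⟩ := exists_isHomogeneous_mul_eq hf.1 hF hk (hdiv f hf.1 h0)
    exact ⟨g, mem_linSys.mpr ⟨hg, fun i => (hf.2 i).of_mul (hmult i)⟩, rfl⟩
  have := (Polynomial.degreeLTEquiv ℂ (k * d + 1 - ∑ i, μ i * m i)).symm.finiteDimensional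
  have h1 := (Submodule.finrank_mono hrange).trans (Submodule.finrank_map_le _ _)
  rw [(Polynomial.degreeLTEquiv ℂ _).finrank_eq, Module.finrank_fin_fun] at h1
  have h2 := (Submodule.finrank_mono hker).trans (Submodule.finrank_map_le _ _)
  rw [Submodule.finrank_map_subtype_eq] at h2
  have h3 := LinearMap.finrank_range_add_finrank_ker ρ
  omega

/-- The plane curve `x₀ ^ k = x₁ ^ (k - 1) x₂`: a line, a conic, or a cuspidal cubic
for `k = 1, 2, 3`. -/
noncomputable def cuspCurve (k : ℕ) : MvPolynomial (Fin 3) ℂ :=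
  X 0 ^ k - X 1 ^ (k - 1) * X 2

/-- The rational parametrization of `cuspCurve k`. -/
noncomputable def cuspParam (k : ℕ) : Fin 3 → Polynomial ℂ :=
  ![Polynomial.X ^ (k - 1), Polynomial.X ^ k, 1]

lemma isHomogeneous_cuspCurve {k : ℕ} (hk : 1 ≤ k) : (cuspCurve k).IsHomogeneous k := by
  have h := (isHomogeneous_X_pow (R := ℂ) (1 : Fin 3) (k - 1)).mul (isHomogeneous_X ℂ (2 : Fin 3))
  rw [Nat.sub_add_cancel hk] at h
  exact (isHomogeneous_X_pow 0 k).sub h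

lemma cuspCurve_dvd {k d : ℕ} (hk : 1 ≤ k) {f : MvPolynomial (Fin 3) ℂ} (hf : f.IsHomogeneous d)
    (h : aeval (cuspParam k) f = 0) : cuspCurve k ∣ f := by
  let Ψ : Polynomial ℂ →ₗ[ℂ] MvPolynomial (Fin 3) ℂ :=
    (Polynomial.basisMonomials ℂ).constr ℂ fun w =>
      X 0 ^ (w * (k - 1) % k) * X 1 ^ ((w - (k - 1) * (w * (k - 1) % k)) / k) *
        X 2 ^ (d - w * (k - 1) % k - (w - (k - 1) * (w * (k - 1) % k)) / k)
  suffices H : cuspCurve k ∣ f - Ψ (aeval (cuspParam k) f) by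
    rwa [h, map_zero, sub_zero] at H
  clear h
  rw [f.as_sum, map_sum, map_sum, ← Finset.sum_sub_distrib]
  refine Finset.dvd_sum fun ν hν => ?_
  have hd : ν.degree = d := by
    rw [Finsupp.degree_eq_weight_one]
    exact hf (mem_support_iff.mp hν)
  rw [Finsupp.degree_eq_sum, Fin.sum_univ_three] at hd
  have hmon : aeval (cuspParam k) (monomial ν (coeff ν f)) =
      coeff ν f • Polynomial.basisMonomials ℂ ((k - 1) * ν 0 + k * ν 1) := by
    rw [aeval_monomial, Finsupp.prod_fintype _ _ (by simp), Fin.prod_univ_three,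
      Polynomial.coe_basisMonomials, Algebra.smul_def]
    change _ = _ * Polynomial.monomial _ 1
    rw [Polynomial.monomial_one_right_eq_X_pow]
    simp [cuspParam, pow_add, pow_mul]
  rw [hmon, map_smul, Module.Basis.constr_basis, monomial_eq,
    Finsupp.prod_fintype _ _ (by simp), Fin.prod_univ_three, smul_eq_C_mul, ← mul_sub]
  refine Dvd.dvd.mul_left ?_ _
  obtain ⟨K, rfl⟩ : ∃ K, k = K + 1 := ⟨k - 1, by omega⟩
  rw [Nat.add_sub_cancel]
  have hmod : (K * ν 0 + (K + 1) * ν 1) * K % (K + 1) = ν 0 % (K + 1) := by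
    rcases K with _ | K
    · simp [Nat.mod_one]
    · rw [show ((K + 1) * ν 0 + (K + 1 + 1) * ν 1) * (K + 1) =
        ν 0 + (K + 1 + 1) * (K * ν 0 + ν 1 * (K + 1)) by ring, Nat.add_mul_mod_self_left]
  obtain ⟨a, i, hi, ha⟩ : ∃ a i, i < K + 1 ∧ ν 0 = (K + 1) * a + i :=
    ⟨ν 0 / (K + 1), ν 0 % (K + 1), Nat.mod_lt _ K.succ_pos, (Nat.div_add_mod _ _).symm⟩
  have hi' : ν 0 % (K + 1) = i := by rw [ha, Nat.mul_add_mod, Nat.mod_eq_of_lt hi]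
  have hj : (K * ν 0 + (K + 1) * ν 1 - K * i) / (K + 1) = K * a + ν 1 := by
    rw [ha, show K * ((K + 1) * a + i) + (K + 1) * ν 1 = (K + 1) * (K * a + ν 1) + K * i by ring,
      Nat.add_sub_cancel, Nat.mul_div_cancel_left _ K.succ_pos]
  have hl : d - i - (K * a + ν 1) = a + ν 2 := by
    have : (K + 1) * a = K * a + a := by ring
    omega
  rw [hmod, hi', hj, hl, ha]
  have h := sub_dvd_pow_sub_pow (X 0 ^ (K + 1)) (X 1 ^ K * X 2 : MvPolynomial (Fin 3) ℂ) a
  refine (h.mul_left (X 0 ^ i * X 1 ^ ν 1 * X 2 ^ ν 2)).trans (dvd_of_eq ?_)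
  ring

/-- The multiplicity of the point `q` on `cuspCurve k`. -/
def cuspMult {K : Type*} [Field K] [DecidableEq K] (k : ℕ) (q : Fin 3 → K) : ℕ :=
  if q 0 ^ k = q 1 ^ (k - 1) * q 2 then if q 1 = 0 then max 1 (k - 1) else 1 else 0

lemma on_curve_of_cuspMult_ne_zero {K : Type*} [Field K] [DecidableEq K] {k : ℕ} {q : Fin 3 → K}
    (h : cuspMult k q ≠ 0) : q 0 ^ k = q 1 ^ (k - 1) * q 2 := by
  by_contra hq
  exact h (if_neg hq)

lemma aeval_cuspCurve (k : ℕ) (y : Fin 3 → Polynomial ℂ) :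
    aeval y (cuspCurve k) = y 0 ^ k - y 1 ^ (k - 1) * y 2 := by
  simp [cuspCurve]

lemma pow_dvd_cuspParam_sub {k : ℕ} (hk : 1 ≤ k) {q : Fin 3 → ℂ} (h : cuspMult k q ≠ 0)
    (h2 : q 2 ≠ 0) (j : Fin 3) :
    (Polynomial.X - Polynomial.C (q 1 / q 0)) ^ cuspMult k q ∣
      Polynomial.C (q 2) * cuspParam k j - Polynomial.C (q j) := by
  have hq := on_curve_of_cuspMult_ne_zero h
  obtain ⟨K, rfl⟩ : ∃ K, k = K + 1 := ⟨k - 1, by omega⟩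
  rw [Nat.add_sub_cancel] at hq
  rw [cuspMult, Nat.add_sub_cancel, if_pos hq]
  split_ifs with h1
  · rw [h1] at hq ⊢
    rw [zero_div, Polynomial.C_0, sub_zero]
    rcases K with _ | K
    · have hq' : q 0 = q 2 := by simpa using hq
      fin_cases j <;> simp [cuspParam, hq', h1]
    · have hq' : q 0 = 0 := by
        rw [zero_pow K.succ_ne_zero, zero_mul] at hq
        exact pow_eq_zero_iff (by omega) |>.mp hq
      rw [max_eq_right (by omega)]
      fin_cases j
      · simp [cuspParam, hq']
      · simpa [cuspParam, h1] using (pow_dvd_pow _ (Nat.le_succ _)).mul_left _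
      · simp [cuspParam]
  · rw [pow_one, Polynomial.dvd_iff_isRoot]
    have h0 : q 0 ≠ 0 := fun h0 => by
      rw [h0, zero_pow K.succ_ne_zero, eq_comm, mul_eq_zero] at hq
      exact hq.elim (pow_ne_zero K h1) h2
    fin_cases j
    · simp only [cuspParam, Polynomial.IsRoot.def]
      simp [div_pow]
      field_simp
      linear_combination -hq
    · simp only [cuspParam, Polynomial.IsRoot.def]
      simp [div_pow]
      field_simp
      linear_combination (-q 1) * hq
    · simp [cuspParam]

/-- The linear change of coordinates with matrix `M`. -/
noncomputable def linSubst (M : Matrix (Fin 3) (Fin 3) ℂ) :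
    MvPolynomial (Fin 3) ℂ →ₐ[ℂ] MvPolynomial (Fin 3) ℂ :=
  aeval fun i => ∑ j, C (M i j) * X j

lemma aeval_linSubst (M : Matrix (Fin 3) (Fin 3) ℂ) (y : Fin 3 → Polynomial ℂ)
    (f : MvPolynomial (Fin 3) ℂ) :
    aeval y (linSubst M f) = aeval (fun i => ∑ j, Polynomial.C (M i j) * y j) f := by
  suffices h : (aeval y).comp (linSubst M) = aeval (fun i => ∑ j, Polynomial.C (M i j) * y j) from
    DFunLike.congr_fun h f
  ext i : 1
  simp [linSubst, map_sum, ← algebraMap_eq, ← Polynomial.algebraMap_eq]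

lemma linSubst_linSubst {A B : Matrix (Fin 3) (Fin 3) ℂ} (h : A * B = 1)
    (f : MvPolynomial (Fin 3) ℂ) : linSubst B (linSubst A f) = f := by
  suffices h : (linSubst B).comp (linSubst A) = AlgHom.id ℂ _ from DFunLike.congr_fun h f
  ext i : 1
  have hC (a : ℂ) : linSubst B (C a) = C a := (linSubst B).commutes a
  have hX (j : Fin 3) : linSubst B (X j) = ∑ l, C (B j l) * X l := aeval_X _ _
  have hi : linSubst A (X i) = ∑ l, C (A i l) * X l := aeval_X _ _
  rw [AlgHom.comp_apply, hi, map_sum]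
  simp only [map_mul (linSubst B), hC, hX, Finset.mul_sum, ← mul_assoc, ← C_mul]
  rw [Finset.sum_comm]
  simp only [← Finset.sum_mul, ← map_sum C, ← Matrix.mul_apply, h, Matrix.one_apply]
  simp

lemma isHomogeneous_linSubst (M : Matrix (Fin 3) (Fin 3) ℂ) {f : MvPolynomial (Fin 3) ℂ} {d : ℕ}
    (hf : f.IsHomogeneous d) : (linSubst M f).IsHomogeneous d := by
  have := hf.aeval (fun i => ∑ j, C (M i j) * X j) (n := 1) fun i =>
    IsHomogeneous.sum _ _ _ fun j _ => isHomogeneous_C_mul_X _ _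
  rwa [one_mul] at this

lemma not_vanishesTo_linSubst_cuspCurve {k : ℕ} (hk : 1 ≤ k) {A B : Matrix (Fin 3) (Fin 3) ℂ}
    (h : B * A = 1) {p : Fin 3 → ℂ} (h2 : cuspMult k (B.mulVec p) ≠ 0 → B.mulVec p 2 ≠ 0) :
    ¬ VanishesTo p (cuspMult k (B.mulVec p) + 1) (linSubst B (cuspCurve k)) := by
  intro hv
  set q := B.mulVec p with hq
  have key (w : Fin 3 → ℂ) : Polynomial.X ^ (cuspMult k q + 1) ∣
      (Polynomial.C (q 0) + Polynomial.X * Polynomial.C (w 0)) ^ k -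
        (Polynomial.C (q 1) + Polynomial.X * Polynomial.C (w 1)) ^ (k - 1) *
        (Polynomial.C (q 2) + Polynomial.X * Polynomial.C (w 2)) := by
    have := hv.pow_dvd_aeval Polynomial.X fun j => Polynomial.C (A.mulVec w j)
    rw [aeval_linSubst, aeval_cuspCurve] at this
    have hj (j : Fin 3) : ∑ l, Polynomial.C (B j l) * (Polynomial.C (p l) +
        Polynomial.X * Polynomial.C (A.mulVec w l)) =
        Polynomial.C (q j) + Polynomial.X * Polynomial.C (w j) := by
      have hw : ∑ l, B j l * A.mulVec w l = w j := by
        change B.mulVec (A.mulVec w) j = w j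
        rw [Matrix.mulVec_mulVec, h, Matrix.one_mulVec]
      rw [← hw, show q j = ∑ l, B j l * p l from rfl, map_sum, map_sum, Finset.mul_sum,
        ← Finset.sum_add_distrib]
      refine Finset.sum_congr rfl fun l _ => ?_
      rw [map_mul, map_mul]
      ring
    simpa only [hj] using this
  obtain ⟨K, rfl⟩ : ∃ K, k = K + 1 := ⟨k - 1, by omega⟩
  rw [Nat.add_sub_cancel] at key
  by_cases hon : q 0 ^ (K + 1) = q 1 ^ K * q 2
  · by_cases h1 : q 1 = 0
    · rcases K with _ | K
      · have hm : cuspMult 1 q = 1 := by simpa [cuspMult, h1] using hon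
        have := key ![0, 0, 1]
        rw [hm, Polynomial.X_pow_dvd_iff] at this
        simpa using this 1 one_lt_two
      · have h0 : q 0 = 0 := by
          rw [h1, zero_pow K.succ_ne_zero, zero_mul] at hon
          exact pow_eq_zero_iff (by omega) |>.mp hon
        have hm : cuspMult (K + 1 + 1) q = K + 1 := by
          simp [cuspMult, h1, h0]
        have := key ![0, 1, 0]
        rw [hm, Polynomial.X_pow_dvd_iff] at this
        have := this (K + 1) (Nat.lt_succ_self _)
        have hq2 := h2 (by omega)
        simp [h0, h1, hq2] at this
    · have hm : cuspMult (K + 1) q = 1 := by simp [cuspMult, h1, hon]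
      have := key ![0, 0, 1]
      rw [hm, Polynomial.X_pow_dvd_iff] at this
      have hE : (Polynomial.C (q 0) + Polynomial.X * Polynomial.C (![0, 0, 1] 0)) ^ (K + 1) -
          (Polynomial.C (q 1) + Polynomial.X * Polynomial.C (![0, 0, 1] 1)) ^ K *
          (Polynomial.C (q 2) + Polynomial.X * Polynomial.C (![0, 0, 1] 2)) =
          Polynomial.C (q 0 ^ (K + 1) - q 1 ^ K * q 2) - Polynomial.X * Polynomial.C (q 1 ^ K) := by
        simp
        ring
      rw [hE] at this
      have := this 1 one_lt_two
      rw [hon, sub_self, Polynomial.C_0, zero_sub, Polynomial.coeff_neg, neg_eq_zero,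
        Polynomial.coeff_X_mul, Polynomial.coeff_C_zero] at this
      exact pow_ne_zero K h1 this
  · have hm : cuspMult (K + 1) q = 0 := by simp [cuspMult, hon]
    have := key 0
    rw [hm, Polynomial.X_pow_dvd_iff] at this
    have := this 0 one_pos
    simp [Polynomial.coeff_zero_eq_eval_zero, sub_eq_zero, hon] at this

/-- The rows of `B` form a coordinate frame in which each point `x i` that lies on `cuspCurve k`
is an affine point of it, and those points are pairwise distinct. -/
def IsCuspFrame {K : Type*} [Field K] [DecidableEq K] {n : ℕ} (k : ℕ)
    (B : Matrix (Fin 3) (Fin 3) K) (x : Fin n → Fin 3 → K) : Prop :=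
  B.det ≠ 0 ∧ (∀ i, cuspMult k (B.mulVec (x i)) ≠ 0 → B.mulVec (x i) 2 ≠ 0) ∧
    ∀ i j, i ≠ j → cuspMult k (B.mulVec (x i)) ≠ 0 → cuspMult k (B.mulVec (x j)) ≠ 0 →
      B.mulVec (x i) 1 / B.mulVec (x i) 0 ≠ B.mulVec (x j) 1 / B.mulVec (x j) 0

theorem finrank_linSys_le_of_isCuspFrame {n k d : ℕ} (hk1 : 1 ≤ k) (hk : k ≤ d)
    {p : Fin n → Fin 3 → ℂ} {B : Matrix (Fin 3) (Fin 3) ℂ} (hB : IsCuspFrame k B p)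
    (m : Fin n → ℕ) :
    Module.finrank ℂ (linSys p d m) ≤ (k * d + 1 - ∑ i, cuspMult k (B.mulVec (p i)) * m i) +
      Module.finrank ℂ (linSys p (d - k) fun i => m i - cuspMult k (B.mulVec (p i))) := by
  obtain ⟨hdet, h2, hdist⟩ := hB
  have hBA : B * B⁻¹ = 1 := Matrix.mul_nonsing_inv _ hdet.isUnit
  have hAB : B⁻¹ * B = 1 := Matrix.nonsing_inv_mul _ hdet.isUnit
  refine finrank_linSys_le_of_curve (F := linSubst B (cuspCurve k))
    (ψ := fun i => ∑ j, Polynomial.C (B⁻¹ i j) * cuspParam k j)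
    (s := fun i => (Polynomial.X - Polynomial.C (B.mulVec (p i) 1 / B.mulVec (p i) 0)) ^
      cuspMult k (B.mulVec (p i)))
    (isHomogeneous_linSubst _ (isHomogeneous_cuspCurve hk1)) hk (fun i => ?_)
    (fun f hf h => ?_) (fun i => not_vanishesTo_linSubst_cuspCurve hk1 hBA (h2 i))
    (fun i => (Polynomial.monic_X_sub_C _).pow _) (fun i => ?_) (fun i j hij => ?_) fun i => ?_
  · refine Polynomial.natDegree_sum_le_of_forall_le _ _ fun j _ =>
      (Polynomial.natDegree_C_mul_le _ _).trans ?_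
    fin_cases j <;> simp [cuspParam]
  · rw [← aeval_linSubst] at h
    have := map_dvd (linSubst B) (cuspCurve_dvd hk1 (isHomogeneous_linSubst _ hf) h)
    rwa [linSubst_linSubst hAB] at this
  · rw [(Polynomial.monic_X_sub_C _).natDegree_pow, Polynomial.natDegree_X_sub_C, mul_one]
  · by_cases hi : cuspMult k (B.mulVec (p i)) = 0
    · simp only [Function.onFun, hi, pow_zero]
      exact isCoprime_one_left
    by_cases hj : cuspMult k (B.mulVec (p j)) = 0
    · simp only [Function.onFun, hj, pow_zero]
      exact isCoprime_one_right
    exact (Polynomial.isCoprime_X_sub_C_of_isUnit_sub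
      (sub_ne_zero.mpr (hdist i j hij hi hj)).isUnit).pow
  · by_cases hi : cuspMult k (B.mulVec (p i)) = 0
    · refine ⟨1, one_ne_zero, fun j => ?_⟩
      simp only [hi, pow_zero]
      exact one_dvd _
    refine ⟨B.mulVec (p i) 2, h2 i hi, fun j => ?_⟩
    have hp : p i j = ∑ l, B⁻¹ j l * B.mulVec (p i) l := by
      change _ = B⁻¹.mulVec (B.mulVec (p i)) j
      rw [Matrix.mulVec_mulVec, hAB, Matrix.one_mulVec]
    have hsum : Polynomial.C (B.mulVec (p i) 2) * ∑ l, Polynomial.C (B⁻¹ j l) * cuspParam k l -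
        Polynomial.C (p i j) = ∑ l, Polynomial.C (B⁻¹ j l) *
          (Polynomial.C (B.mulVec (p i) 2) * cuspParam k l - Polynomial.C (B.mulVec (p i) l)) := by
      rw [hp, map_sum, Finset.mul_sum, ← Finset.sum_sub_distrib]
      refine Finset.sum_congr rfl fun l _ => ?_
      rw [map_mul]
      ring
    rw [hsum]
    exact Finset.dvd_sum fun l _ => (pow_dvd_cuspParam_sub hk1 hi (h2 i hi) l).mul_left _

lemma cuspMult_map {K L : Type*} [Field K] [Field L] [DecidableEq K] [DecidableEq L] (φ : K →+* L)
    (k : ℕ) (q : Fin 3 → K) : cuspMult k (fun j => φ (q j)) = cuspMult k q := by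
  simp only [cuspMult, ← map_pow, ← map_mul, φ.injective.eq_iff, map_eq_zero]

lemma mulVec_map {K L : Type*} [Field K] [Field L] (φ : K →+* L) (B : Matrix (Fin 3) (Fin 3) K)
    (x : Fin 3 → K) : (B.map φ).mulVec (fun j => φ (x j)) = fun j => φ (B.mulVec x j) :=
  _root_.funext fun j => (RingHom.map_mulVec φ B x j).symm

lemma IsCuspFrame.map {K L : Type*} [Field K] [Field L] [DecidableEq K] [DecidableEq L]
    (φ : K →+* L) {n k : ℕ} {B : Matrix (Fin 3) (Fin 3) K} {x : Fin n → Fin 3 → K}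
    (h : IsCuspFrame k B x) : IsCuspFrame k (B.map φ) fun i j => φ (x i j) := by
  obtain ⟨h1, h2, h3⟩ := h
  refine ⟨?_, fun i hi => ?_, fun i j hij hi hj => ?_⟩
  · rw [← RingHom.mapMatrix_apply, ← RingHom.map_det]
    exact (map_ne_zero φ).mpr h1
  · simp only [mulVec_map, cuspMult_map] at hi ⊢
    exact (map_ne_zero φ).mpr (h2 i hi)
  · simp only [mulVec_map, cuspMult_map, ← map_div₀] at hi hj ⊢
    exact fun h => h3 i j hij hi hj (φ.injective h)

instance {K : Type*} [Field K] [DecidableEq K] {n k : ℕ} {B : Matrix (Fin 3) (Fin 3) K}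
    {x : Fin n → Fin 3 → K} : Decidable (IsCuspFrame k B x) := by
  unfold IsCuspFrame
  infer_instance

/-- The upper bound for the dimension of the system of degree `d` with multiplicities `m` at the
points `x`, obtained by successive restriction to the curves `cuspCurve k` in the given frames. -/
def curveBound {n : ℕ} (x : Fin n → Fin 3 → ℚ) :
    List (ℕ × Matrix (Fin 3) (Fin 3) ℚ) → ℕ → (Fin n → ℕ) → ℕ
  | [], d, m => if d = 0 ∧ ∃ i, 0 < m i then 0 else (d + 2).choose 2
  | (k, B) :: l, d, m =>
    if 1 ≤ k ∧ k ≤ d ∧ IsCuspFrame k B x then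
      (k * d + 1 - ∑ i, cuspMult k (B.mulVec (x i)) * m i) +
        curveBound x l (d - k) fun i => m i - cuspMult k (B.mulVec (x i))
    else (d + 2).choose 2

lemma finrank_linSys_le_choose {n : ℕ} (p : Fin n → Fin 3 → ℂ) (d : ℕ) (m : Fin n → ℕ) :
    Module.finrank ℂ (linSys p d m) ≤ (d + 2).choose 2 := by
  rw [← finrank_homogeneousSubmodule]
  exact Submodule.finrank_mono (linSys_le p d m)

lemma linSys_zero_eq_bot {n : ℕ} (p : Fin n → Fin 3 → ℂ) {m : Fin n → ℕ} {i : Fin n}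
    (hi : 0 < m i) : linSys p 0 m = ⊥ := by
  rw [Submodule.eq_bot_iff]
  intro f hf
  obtain ⟨hf0, hf⟩ := mem_linSys.mp hf
  have h := vanishesTo_iff_eval_mderiv.mp (hf i) 0 (by simpa using hi)
  rw [← totalDegree_zero_iff_isHomogeneous, totalDegree_eq_zero_iff_eq_C] at hf0
  rw [hf0] at h ⊢
  have h0 : coeff 0 f = 0 := by simpa [mderiv] using h
  rw [h0, C_0]

theorem finrank_linSys_le_curveBound {n : ℕ} (x : Fin n → Fin 3 → ℚ)
    (l : List (ℕ × Matrix (Fin 3) (Fin 3) ℚ)) (d : ℕ) (m : Fin n → ℕ) :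
    Module.finrank ℂ (linSys (fun i j => algebraMap ℚ ℂ (x i j)) d m) ≤ curveBound x l d m := by
  induction l generalizing d m with
  | nil =>
    rw [curveBound]
    split_ifs with h
    · obtain ⟨rfl, i, hi⟩ := h
      rw [linSys_zero_eq_bot _ hi, finrank_bot]
    · exact finrank_linSys_le_choose _ d m
  | cons a l ih =>
    rw [curveBound]
    split_ifs with h
    · obtain ⟨h1, hd, hB⟩ := h
      have := finrank_linSys_le_of_isCuspFrame h1 hd (hB.map (algebraMap ℚ ℂ)) m
      have hc (i : Fin n) : cuspMult a.1 ((a.2.map (algebraMap ℚ ℂ)).mulVec fun j =>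
          algebraMap ℚ ℂ (x i j)) = cuspMult a.1 (a.2.mulVec (x i)) := by
        rw [mulVec_map, cuspMult_map]
      have hm := _root_.funext fun i => congrArg (m i - ·) (hc i)
      rw [hm] at this
      simp only [hc] at this
      exact this.trans (Nat.add_le_add_left (ih _ _) _)
    · exact finrank_linSys_le_choose _ d m

/-- A generic system has dimension `N` if the curves of a certificate bound it above and a
multiple fixed curve bounds it below. -/
theorem generically_finrank_linSys_eq {n : ℕ} (x : Fin n → Fin 3 → ℚ)
    (l : List (ℕ × Matrix (Fin 3) (Fin 3) ℚ)) {d : ℕ} {m : Fin n → ℕ} {N : ℕ}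
    (hN : curveBound x l d m ≤ N) (a d₁ d₂ : ℕ) (m₁ m₂ : Fin n → ℕ)
    (h₁ : ∑ i, ∑ s ∈ Finset.range (m₁ i), (s + 1) < (d₁ + 2).choose 2)
    (h₂ : N + ∑ i, ∑ s ∈ Finset.range (m₂ i), (s + 1) ≤ (d₂ + 2).choose 2)
    (hd : a * d₁ + d₂ = d) (hm : ∀ i, m i ≤ a * m₁ i + m₂ i) :
    Generically n fun p => Module.finrank ℂ (linSys p d m) = N := by
  obtain ⟨P, hP0, hP⟩ := generically_finrank_linSys_le (fun i j => algebraMap ℚ ℂ (x i j)) d m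
  refine ⟨P, hP0, fun p hp h => le_antisymm ?_ ?_⟩
  · exact (hP p hp h).trans ((finrank_linSys_le_curveBound x l d m).trans hN)
  · exact le_finrank_linSys_of_pow_mul hp a d₁ d₂ m₁ m₂ h₁ h₂ hd hm

lemma Generically.projDim_eq {k d : ℕ} {m : Fin k → ℕ} {N : ℕ} {a v : ℤ}
    (h : Generically k fun p => Module.finrank ℂ (linSys p d m) = N) (hv : virtDim d m = v)
    (ha : (N : ℤ) - 1 = a) (hav : max (-1) v < a) :
    virtDim d m = v ∧ Generically k fun p => projDim p d m = a ∧
      projDim p d m > max (-1) (virtDim d m) := by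
  obtain ⟨P, hP0, hP⟩ := h
  refine ⟨hv, P, hP0, fun p hp hpP => ?_⟩
  have h : projDim p d m = a := by
    have := hP p hp hpP
    rw [projDim, this, ha]
  exact ⟨h, by rwa [hv, h]⟩

lemma generically_finrank_linSys_nine_two :
    Generically 3 fun p => Module.finrank ℂ (linSys p 9 (qh 2 0)) = 16 :=
  generically_finrank_linSys_eq ![![1, 2, 3], ![1, 0, 0], ![0, 1, 0]]
    (List.replicate 6 (1, !![1, 1, 1; 1, 0, 0; 1, 1, 0]))
    (by decide +kernel) 3 1 6 ![0, 1, 1] ![0, 3, 3] (by decide) (by decide) rfl (by decide)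

lemma generically_finrank_linSys_ten_two :
    Generically 3 fun p => Module.finrank ℂ (linSys p 10 (qh 2 1)) = 24 :=
  generically_finrank_linSys_eq ![![1, 2, 3], ![1, 0, 0], ![0, 1, 0]]
    (([0, 0, 0, 0, 0, 1, 2] : List (Fin 3)).map ![
      (1, !![1, 1, 1; 1, 0, 0; 1, 1, 0]),
      (1, !![1, 3, -2; 0, 1, 0; 1, 0, 0]),
      (1, !![-3, 1, 1; 1, 0, 0; 0, 1, 0])])
    (by decide +kernel) 2 1 8 ![0, 1, 1] ![1, 4, 4] (by decide) (by decide) rfl (by decide)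

lemma generically_finrank_linSys_twelve_four :
    Generically 5 fun p => Module.finrank ℂ (linSys p 12 (qh 4 3)) = 4 :=
  generically_finrank_linSys_eq ![![1, 2, 3], ![1, 0, 0], ![0, 1, 0], ![0, 0, 1], ![1, 1, 1]]
    (([0, 1, 0, 1, 0, 1, 2, 0, 3, 0, 1, 2] : List (Fin 4)).map ![
      (1, !![1, 1, 1; 0, 1, 0; 0, 1, 1]),
      (1, !![1, -1, 1; 0, 1, 0; 1, 0, 0]),
      (1, !![1, 3, -2; 0, 1, 0; 1, 0, 0]),
      (1, !![0, 2, -1; 0, 1, 0; 1, 0, 0])])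
    (by decide +kernel) 3 2 6 ![1, 1, 1, 1, 1] ![0, 3, 3, 3, 3]
    (by decide) (by decide) rfl (by decide)

lemma generically_finrank_linSys_thirteen_four :
    Generically 5 fun p => Module.finrank ℂ (linSys p 13 (qh 4 4)) = 12 :=
  generically_finrank_linSys_eq ![![1, 2, 3], ![1, 0, 0], ![0, 1, 0], ![0, 0, 1], ![1, 1, 1]]
    (([0, 1, 0, 1, 2, 0, 3, 0, 1, 2, 0, 3, 0] : List (Fin 4)).map ![
      (1, !![1, 1, 1; 0, 1, 0; 0, 1, 1]),
      (1, !![1, -1, 1; 0, 1, 0; 1, 0, 0]),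
      (1, !![1, 3, -2; 0, 1, 0; 1, 0, 0]),
      (1, !![0, 2, -1; 0, 1, 0; 1, 0, 0])])
    (by decide +kernel) 2 2 9 ![1, 1, 1, 1, 1] ![2, 4, 4, 4, 4]
    (by decide) (by decide) rfl (by decide)

lemma generically_finrank_linSys_nine_three :
    Generically 4 fun p => Module.finrank ℂ (linSys p 9 (qh 3 0)) = 1 :=
  generically_finrank_linSys_eq ![![1, 2, 3], ![1, 0, 0], ![0, 1, 0], ![0, 0, 1]]
    (([0, 1, 2, 0, 1, 2, 0, 1, 2] : List (Fin 3)).map ![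
      (1, !![1, 1, 1; 0, 1, 0; 0, 1, 1]),
      (1, !![1, 1, 1; 1, 0, 0; 1, 1, 0]),
      (1, !![1, -1, 1; 1, 0, 0; 1, 0, 1])])
    (by decide +kernel) 3 3 0 ![0, 2, 2, 2] ![0, 0, 0, 0]
    (by decide) (by decide) rfl (by decide)

lemma generically_finrank_linSys_ten_three :
    Generically 4 fun p => Module.finrank ℂ (linSys p 10 (qh 3 1)) = 5 :=
  generically_finrank_linSys_eq ![![1, 2, 3], ![1, 0, 0], ![0, 1, 0], ![0, 0, 1]]
    (([0, 1, 2, 0, 1, 2, 0, 3, 0, 3] : List (Fin 4)).map ![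
      (1, !![1, 1, 1; 0, 1, 0; 0, 1, 1]),
      (1, !![1, 1, 1; 1, 0, 0; 1, 1, 0]),
      (1, !![1, -1, 1; 1, 0, 0; 1, 0, 1]),
      (1, !![1, 3, -2; 0, 1, 0; 1, 0, 0])])
    (by decide +kernel) 2 3 4 ![0, 2, 2, 2] ![1, 2, 2, 2]
    (by decide) (by decide) rfl (by decide)

lemma generically_finrank_linSys_fourteen_five :
    Generically 6 fun p => Module.finrank ℂ (linSys p 14 (qh 5 5)) = 1 :=
  generically_finrank_linSys_eq
    ![![1, 1, 1], ![1, 0, 0], ![0, 1, 0], ![0, 0, 1], ![1, 2, 3], ![1, 3, 2]]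
    (([0, 1, 2, 3, 4, 5, 0] : List (Fin 6)).map ![
      (2, !![6, 0, 5; -6, 0, 5; -6, 20, 5]),
      (2, !![-2, -1, 0; 4, -1, 0; 1, -1, 3]),
      (2, !![-2, 0, -1; -4, 0, 1; -1, -3, 1]),
      (2, !![15, -6, -1; -5, -2, 3; -45, -18, 47]),
      (2, !![15, -1, -6; 5, -3, 2; 45, -47, 18]),
      (2, !![7, 0, -3; -5, 0, 3; -14, 3, 3])])
    (by decide +kernel) 2 2 10 ![0, 1, 1, 1, 1, 1] ![5, 4, 4, 4, 4, 4]
    (by decide) (by decide) rfl (by decide)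

lemma generically_finrank_linSys_eighteen_seven :
    Generically 8 fun p => Module.finrank ℂ (linSys p 18 (qh 7 9)) = 1 :=
  generically_finrank_linSys_eq
    ![![0, 0, 1], ![2, 1, 8], ![4, -8, 1], ![2, -1, 8], ![1, 1, 1], ![4, 8, 1], ![9, 27, 1],
      ![2, 1, 0]]
    (([0, 1, 2, 0, 1, 2, 0, 1, 2] : List (Fin 3)).map ![
      (1, !![0, 2, 1; 1, 0, 0; 1, 0, 1]),
      (2, !![288, -246, 816; -591, 192, 828; -369, 628, 1457]),
      (3, 1)])
    (by decide +kernel) 3 6 0 ![3, 2, 2, 2, 2, 2, 2, 2] ![0, 0, 0, 0, 0, 0, 0, 0]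
    (by decide) (by decide) rfl (by decide)

theorem special_L_3e_families_and_sporadic :
    (∀ e : ℕ, 1 ≤ e → e ≤ 2 →
      virtDim (3 * e + 6) (qh (2 * e) (3 * e - 3)) = -12 * (e : ℤ) + 24 ∧
      Generically (2 * e + 1) (fun p =>
        projDim p (3 * e + 6) (qh (2 * e) (3 * e - 3)) = 27 - 12 * (e : ℤ) ∧
        projDim p (3 * e + 6) (qh (2 * e) (3 * e - 3)) >
          max (-1) (virtDim (3 * e + 6) (qh (2 * e) (3 * e - 3))))) ∧
    (∀ e : ℕ, 1 ≤ e → e ≤ 2 →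
      virtDim (3 * e + 7) (qh (2 * e) (3 * e - 2)) = -12 * (e : ℤ) + 34 ∧
      Generically (2 * e + 1) (fun p =>
        projDim p (3 * e + 7) (qh (2 * e) (3 * e - 2)) = 35 - 12 * (e : ℤ) ∧
        projDim p (3 * e + 7) (qh (2 * e) (3 * e - 2)) >
          max (-1) (virtDim (3 * e + 7) (qh (2 * e) (3 * e - 2))))) ∧
    (virtDim 9 (qh 3 0) = -9 ∧
      Generically 4 (fun p =>
        projDim p 9 (qh 3 0) = 0 ∧
        projDim p 9 (qh 3 0) > max (-1) (virtDim 9 (qh 3 0)))) ∧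
    (virtDim 10 (qh 3 1) = 1 ∧
      Generically 4 (fun p =>
        projDim p 10 (qh 3 1) = 4 ∧
        projDim p 10 (qh 3 1) > max (-1) (virtDim 10 (qh 3 1)))) ∧
    (virtDim 14 (qh 5 5) = -1 ∧
      Generically 6 (fun p =>
        projDim p 14 (qh 5 5) = 0 ∧
        projDim p 14 (qh 5 5) > max (-1) (virtDim 14 (qh 5 5)))) ∧
    (virtDim 18 (qh 7 9) = -3 ∧
      Generically 8 (fun p =>
        projDim p 18 (qh 7 9) = 0 ∧
        projDim p 18 (qh 7 9) > max (-1) (virtDim 18 (qh 7 9)))) := by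
  refine ⟨fun e h₁ h₂ => ?_, fun e h₁ h₂ => ?_, ?_, ?_, ?_, ?_⟩
  · interval_cases e
    · exact generically_finrank_linSys_nine_two.projDim_eq (by decide) (by norm_num) (by decide)
    · exact generically_finrank_linSys_twelve_four.projDim_eq (by decide) (by norm_num) (by decide)
  · interval_cases e
    · exact generically_finrank_linSys_ten_two.projDim_eq (by decide) (by norm_num) (by decide)
    · exact generically_finrank_linSys_thirteen_four.projDim_eq (by decide) (by norm_num)
        (by decide)
  · exact generically_finrank_linSys_nine_three.projDim_eq (by decide) (by norm_num) (by decide)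
  · exact generically_finrank_linSys_ten_three.projDim_eq (by decide) (by norm_num) (by decide)
  · exact generically_finrank_linSys_fourteen_five.projDim_eq (by decide) (by norm_num) (by decide)
  · exact generically_finrank_linSys_eighteen_seven.projDim_eq (by decide) (by norm_num)
      (by decide)
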